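/- Let R be a commutative ring, x : ℕ → R a sequence, and n ≥ 1. Then (det B_{n+1})² · (det C_n · det D_n + det C_{n−1} · det D_{n+1}) + (det B_n)² · (det C_{n+1} · det D_{n+1} + det C_n · det D_{n+2}) = 4 · det B_{n+1} · det B_n · det C_n · det D_{n+1}, where B_k, C_k, D_k are the k×k matrices with (i,j)-entries x_{|i−j|} − x_{i+j−1}, x_{|i−j|} − x_{i+j}, x_{|i−j|} + x_{i+j−2} respectively (indices i, j run over 1,…,k; the 0×0 determinant is 1). -/

import Mathlib

/-!
The relation follows from two bilinear identities, in which `B'_n` is the companion of `B_n` with a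
plus sign:

* `C_n D_n + C_{n-1} D_{n+1} = 4 B_n B'_n` for `n ≥ 1`,
* `B_n B'_{n+1} + B_{n+1} B'_n = C_n D_{n+1}`

(determinants understood). Substituting the first one for `n` and `n + 1` into the left-hand side
leaves `4 B_n B_{n+1}` times the second.

Both identities compute twice a Toeplitz determinant `A_m = det (x_{|i-j|})` in two ways. On one
hand, the reflection of `{0, …, m-1}` in its centre splits the matrix into a symmetric and an
antisymmetric part: `A_{2n} = B_n B'_n` (`detA_even`) and `2 A_{2n+1} = C_n D_{n+1}`
(`two_detA_odd`). On the other hand, `2 A_m` is the sum over `ε = ±1` of the determinants obtained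
by replacing row `0` by `x_j + ε x_{m-j}` (`bordered_add`). This row is (anti)symmetric under
`j ↦ m - j`, so these determinants also factor, now by the reflection in `m / 2`
(`det_bordered_odd`, `two_det_bordered_even_pos`, `two_det_bordered_even_neg`). All factorizations
are instances of `det_fold`.
-/


/-- The `n × n` matrix `A_n` with `(i,j)`-entry `x_{|i-j|}` (rows and columns
indexed by `1, …, n`, here realized by `Fin n` via `i ↦ i+1`). -/
def matA {R : Type*} [CommRing R] (x : ℕ → R) (n : ℕ) : Matrix (Fin n) (Fin n) R :=
  Matrix.of fun i j => x ((i : ℤ) - (j : ℤ)).natAbs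

/-- The `n × n` matrix `B_n` with `(i,j)`-entry `x_{|i-j|} - x_{i+j-1}`. -/
def matB {R : Type*} [CommRing R] (x : ℕ → R) (n : ℕ) : Matrix (Fin n) (Fin n) R :=
  Matrix.of fun i j => x ((i : ℤ) - (j : ℤ)).natAbs - x ((i : ℕ) + (j : ℕ) + 1)

/-- The `n × n` matrix `B'_n` with `(i,j)`-entry `x_{|i-j|} + x_{i+j-1}`. -/
def matB' {R : Type*} [CommRing R] (x : ℕ → R) (n : ℕ) : Matrix (Fin n) (Fin n) R :=
  Matrix.of fun i j => x ((i : ℤ) - (j : ℤ)).natAbs + x ((i : ℕ) + (j : ℕ) + 1)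

/-- The `n × n` matrix `C_n` with `(i,j)`-entry `x_{|i-j|} - x_{i+j}`. -/
def matC {R : Type*} [CommRing R] (x : ℕ → R) (n : ℕ) : Matrix (Fin n) (Fin n) R :=
  Matrix.of fun i j => x ((i : ℤ) - (j : ℤ)).natAbs - x ((i : ℕ) + (j : ℕ) + 2)

/-- The `n × n` matrix `D_n` with `(i,j)`-entry `x_{|i-j|} + x_{i+j-2}`. -/
def matD {R : Type*} [CommRing R] (x : ℕ → R) (n : ℕ) : Matrix (Fin n) (Fin n) R :=
  Matrix.of fun i j => x ((i : ℤ) - (j : ℤ)).natAbs + x ((i : ℕ) + (j : ℕ))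

/-- Simultaneous folding of rows and columns: adding `F` times the upper rows to the lower rows
and subtracting `F` times the right columns from the left ones kills the lower left block, so the
determinant factors. -/
theorem fold_det {R α β : Type*} [CommRing R] [Fintype α] [Fintype β] [DecidableEq α]
    [DecidableEq β] (P : Matrix α α R) (Q : Matrix α β R) (S : Matrix β α R) (T : Matrix β β R)
    (F : Matrix β α R) (h : F * P + S = (T + F * Q) * F) :
    (Matrix.fromBlocks P Q S T).det = (P - Q * F).det * (T + F * Q).det := by
  have key : Matrix.fromBlocks 1 0 F 1 * Matrix.fromBlocks P Q S T *
      Matrix.fromBlocks 1 0 (-F) 1 = Matrix.fromBlocks (P - Q * F) Q 0 (T + F * Q) := by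
    simp only [Matrix.fromBlocks_multiply, Matrix.fromBlocks_inj]
    refine ⟨by simp [sub_eq_add_neg], by simp, ?_, by simp [add_comm]⟩
    simp only [Matrix.one_mul, Matrix.mul_one, Matrix.mul_neg, h, add_comm (F * Q) T]
    exact add_neg_cancel _
  have h2 := congrArg Matrix.det key
  simpa [Matrix.det_mul, Matrix.det_fromBlocks_zero₁₂, Matrix.det_fromBlocks_zero₂₁] using h2

theorem sum_ind {R : Type*} [CommRing R] (k t : ℕ) (g : ℕ → R) :
    ∑ c : Fin k, (if (c : ℕ) = t then g c else 0) = if t < k then g t else 0 := by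
  rw [Fin.sum_univ_eq_sum_range (fun c => if c = t then g c else 0) k]
  simp

/-- Summing against the indicator of `c + s = u`. -/
theorem sum_shift {R : Type*} [CommRing R] (k s u : ℕ) (g : ℕ → R) :
    ∑ c : Fin k, (if (c : ℕ) + s = u then g c else 0) =
      if s ≤ u ∧ u - s < k then g (u - s) else 0 := by
  by_cases hs : s ≤ u
  · simp only [hs, true_and]
    rw [← sum_ind]
    refine Finset.sum_congr rfl fun c _ => if_congr (by omega) rfl rfl
  · rw [if_neg (by omega)]
    exact Finset.sum_eq_zero fun c _ => if_neg (by omega)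

/-- `fold_det` for an `m × m` matrix whose index set is split into the positions `p 0, …, p (k-1)`
and `q 0, …, q (l-1)`. The folding matrix has entry `ε` where `a + s = b + t` and `0` elsewhere,
i.e. position `q b` is the mirror image of `p a` when `a + s = b + t`; the shifts `s`, `t`
accommodate unpaired positions such as a centre of symmetry. The hypotheses `hX`, `hY` name
the two factors, and `h` says that the block to be eliminated vanishes. -/
theorem det_fold {R : Type*} [CommRing R] {m k l : ℕ} (hm : k + l = m)
    (M : ℕ → ℕ → R) (p q : ℕ → ℕ) (hp : ∀ a < k, p a < m) (hq : ∀ b < l, q b < m)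
    (hpp : ∀ a < k, ∀ b < k, p a = p b → a = b) (hqq : ∀ a < l, ∀ b < l, q a = q b → a = b)
    (hpq : ∀ a < k, ∀ b < l, p a ≠ q b) (s t : ℕ) (ε : R) (X Y : ℕ → ℕ → R)
    (hX : ∀ a < k, ∀ a' < k, X a a' = M (p a) (p a') -
      if t ≤ a' + s ∧ a' + s - t < l then M (p a) (q (a' + s - t)) * ε else 0)
    (hY : ∀ b < l, ∀ b' < l, Y b b' = M (q b) (q b') +
      if s ≤ b + t ∧ b + t - s < k then ε * M (p (b + t - s)) (q b') else 0)
    (h : ∀ b < l, ∀ a < k,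
      (if s ≤ b + t ∧ b + t - s < k then ε * M (p (b + t - s)) (p a) else 0) + M (q b) (p a) =
        if t ≤ a + s ∧ a + s - t < l then Y b (a + s - t) * ε else 0) :
    (Matrix.of fun i j : Fin m => M i j).det =
      (Matrix.of fun a a' : Fin k => X a a').det * (Matrix.of fun b b' : Fin l => Y b b').det := by
  let e : Fin k ⊕ Fin l → Fin m :=
    Sum.elim (fun a => ⟨p a, hp a a.2⟩) (fun b => ⟨q b, hq b b.2⟩)
  have he : Function.Bijective e := by
    rw [Fintype.bijective_iff_injective_and_card]
    refine ⟨?_, by simp [hm]⟩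
    rintro (a | a) (b | b) hab <;> simp only [e, Sum.elim_inl, Sum.elim_inr, Fin.mk.injEq] at hab
    · rw [Fin.ext (hpp a a.2 b b.2 hab)]
    · exact absurd hab (hpq a a.2 b b.2)
    · exact absurd hab.symm (hpq b b.2 a a.2)
    · rw [Fin.ext (hqq a a.2 b b.2 hab)]
  let P : Matrix (Fin k) (Fin k) R := Matrix.of fun a a' => M (p a) (p a')
  let Q : Matrix (Fin k) (Fin l) R := Matrix.of fun a b => M (p a) (q b)
  let S : Matrix (Fin l) (Fin k) R := Matrix.of fun b a => M (q b) (p a)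
  let T : Matrix (Fin l) (Fin l) R := Matrix.of fun b b' => M (q b) (q b')
  let F : Matrix (Fin l) (Fin k) R := Matrix.of fun b a => if (a : ℕ) + s = b + t then ε else 0
  have hb : (Matrix.of fun i j : Fin m => M i j).submatrix (Equiv.ofBijective e he)
      (Equiv.ofBijective e he) = Matrix.fromBlocks P Q S T := by
    ext (a | a) (b | b) <;> rfl
  have hPX : P - Q * F = Matrix.of fun a a' : Fin k => X a a' := by
    ext a a'
    simp only [P, Q, F, Matrix.sub_apply, Matrix.mul_apply, Matrix.of_apply, mul_ite, mul_zero,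
      hX a a.2 a' a'.2, eq_comm (a := (a' : ℕ) + s)]
    rw [sum_shift l t (a' + s) fun d => M (p a) (q d) * ε]
  have hTY : T + F * Q = Matrix.of fun b b' : Fin l => Y b b' := by
    ext b b'
    simp only [T, Q, F, Matrix.add_apply, Matrix.mul_apply, Matrix.of_apply, ite_mul, zero_mul,
      hY b b.2 b' b'.2]
    rw [sum_shift k s (b + t) fun c => ε * M (p c) (q b')]
  rw [← Matrix.det_submatrix_equiv_self (Equiv.ofBijective e he), hb, fold_det P Q S T F, hPX, hTY]
  rw [hTY]
  ext b a
  simp only [P, S, F, Matrix.add_apply, Matrix.mul_apply, Matrix.of_apply, ite_mul, zero_mul,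
    mul_ite, mul_zero, eq_comm (a := (a : ℕ) + s) (b := _ + t)]
  rw [sum_shift l t (a + s) fun d => Y b d * ε, ← h b b.2 a a.2,
    ← sum_shift k s (b + t) fun c => ε * M (p c) (p a)]

/-- Used to pass to `D_n` from the matrix whose row of the central position is not doubled. -/
theorem det_eq_two_mul_row {R : Type*} [CommRing R] {n : ℕ} (M N : Matrix (Fin (n + 1)) (Fin (n + 1)) R)
    (h0 : ∀ j, N 0 j = 2 * M 0 j) (h1 : ∀ i j, i ≠ 0 → N i j = M i j) : N.det = 2 * M.det := by
  have : N = M.updateRow 0 ((2 : R) • M 0) := by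
    ext i j
    by_cases hi : i = 0
    · subst hi; simp [h0]
    · simp [Matrix.updateRow_ne hi, h1 i j hi]
  rw [this, Matrix.det_updateRow_smul, Matrix.updateRow_eq_self]

/-- Entries of the Toeplitz matrix `x_{|i-j|}` whose row `0` is replaced by
`x_j + ε x_{m-j}`, the sum of `ε` times row `m` of the infinite Toeplitz matrix and row `0`.
It is used for `j < m`, where the subtraction `m - j` is not truncated. -/
def borderedEntry {R : Type*} [CommRing R] (x : ℕ → R) (m : ℕ) (ε : R) (i j : ℕ) : R :=
  x ((i : ℤ) - (j : ℤ)).natAbs + if i = 0 then ε * x (m - j) else 0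

/-- Linearity of the determinant in row `0`. -/
theorem bordered_add {R : Type*} [CommRing R] (x : ℕ → R) (m : ℕ) :
    (Matrix.of fun i j : Fin (m + 1) => borderedEntry x (m + 1) 1 i j).det +
      (Matrix.of fun i j : Fin (m + 1) => borderedEntry x (m + 1) (-1) i j).det =
      2 * (matA x (m + 1)).det := by
  have key : ∀ ε : R, (Matrix.of fun i j : Fin (m + 1) => borderedEntry x (m + 1) ε i j).det =
      (matA x (m + 1)).det +
        ε * ((matA x (m + 1)).updateRow 0 fun j => x (m + 1 - j)).det := by
    intro ε
    have : (Matrix.of fun i j : Fin (m + 1) => borderedEntry x (m + 1) ε i j) =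
        (matA x (m + 1)).updateRow 0 ((matA x (m + 1)) 0 + ε • fun j : Fin (m + 1) => x (m + 1 - j)) := by
      ext i j
      by_cases hi : i = 0
      · subst hi; simp [borderedEntry, matA]
      · have : (i : ℕ) ≠ 0 := fun h => hi (Fin.ext h)
        simp only [Matrix.updateRow_ne hi, borderedEntry, matA, this, Matrix.of_apply, if_false, add_zero]
    rw [this, Matrix.det_updateRow_add, Matrix.det_updateRow_smul, Matrix.updateRow_eq_self]
  rw [key, key]; ring

/-- Reflection in the half-integer point `n - 1/2`. -/
theorem detA_even {R : Type*} [CommRing R] (x : ℕ → R) (n : ℕ) :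
    (matA x (2 * n)).det = (matB x n).det * (matB' x n).det := by
  refine det_fold (m := 2 * n) (k := n) (l := n) (by omega)
    (fun i j => x ((i : ℤ) - (j : ℤ)).natAbs) (fun a => n - 1 - a) (fun b => n + b)
    (by intros; omega) (by intros; omega) (by intros; omega) (by intros; omega)
    (by intros; omega) 0 0 1 (fun i j => x ((i : ℤ) - (j : ℤ)).natAbs - x (i + j + 1))
    (fun i j => x ((i : ℤ) - (j : ℤ)).natAbs + x (i + j + 1)) ?_ ?_ ?_
  · intro a ha b hb
    rw [if_pos (by omega), mul_one]
    congr 2 <;> omega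
  · intro a ha b hb
    rw [if_pos (by omega), one_mul]
    congr 2 <;> omega
  · intro b hb a ha
    rw [if_pos (by omega), if_pos (by omega), one_mul, mul_one]
    congr 2 <;> omega

/-- Reflection in the central position `n`. -/
theorem two_detA_odd {R : Type*} [CommRing R] (x : ℕ → R) (n : ℕ) :
    2 * (matA x (2 * n + 1)).det = (matC x n).det * (matD x (n + 1)).det := by
  have := det_fold (m := 2 * n + 1) (k := n) (l := n + 1) (by omega)
    (fun i j => x ((i : ℤ) - (j : ℤ)).natAbs) (fun a => n - 1 - a) (fun b => n + b)
    (by intros; omega) (by intros; omega) (by intros; omega) (by intros; omega)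
    (by intros; omega) 1 0 1 (fun i j => x ((i : ℤ) - (j : ℤ)).natAbs - x (i + j + 2))
    (fun i j => x ((i : ℤ) - (j : ℤ)).natAbs + if i = 0 then 0 else x (i + j)) ?_ ?_ ?_
  · rw [det_eq_two_mul_row _ (matD x (n + 1)) _ _]
    · rw [show (matA x (2 * n + 1)).det = _ from this]
      exact mul_left_comm _ _ _
    · intro j; simp [matD, two_mul]
    · intro i j hi
      have : (i : ℕ) ≠ 0 := fun h => hi (Fin.ext h)
      simp [matD, hi]
  · intro a ha b hb
    rw [if_pos (by omega), mul_one]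
    congr 2 <;> omega
  · intro a ha b hb
    grind
  · intro b hb a ha
    grind

/-- For `ε = ±1` the modified row `0` is symmetric or antisymmetric under reflection in `n + 1/2`,
which pairs the positions `1, …, 2n`. -/
theorem det_bordered_odd {R : Type*} [CommRing R] (x : ℕ → R) (n : ℕ) (ε : R) (hε : ε * ε = 1) :
    (Matrix.of fun i j : Fin (2 * n + 1) => borderedEntry x (2 * n + 1) ε i j).det =
      (Matrix.of fun i j : Fin n => x ((i : ℤ) - (j : ℤ)).natAbs - ε * x (i + j + 1)).det *
      (Matrix.of fun i j : Fin (n + 1) =>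
        x ((i : ℤ) - (j : ℤ)).natAbs + ε * x (i + j + 1)).det := by
  refine det_fold (m := 2 * n + 1) (k := n) (l := n + 1) (by omega)
    (borderedEntry x (2 * n + 1) ε) (fun a => n + 1 + a) (fun b => n - b)
    (by intros; omega) (by intros; omega) (by intros; omega) (by intros; omega)
    (by intros; omega) 0 0 ε (fun i j => x ((i : ℤ) - (j : ℤ)).natAbs - ε * x (i + j + 1))
    (fun i j => x ((i : ℤ) - (j : ℤ)).natAbs + ε * x (i + j + 1)) ?_ ?_ ?_
  all_goals unfold borderedEntry; intro a ha b hb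
  · grind
  · grind
  · grind

/-- With `n = k + 1`: reflection in position `n`, which pairs `1, …, n - 1` with
`n + 1, …, 2n - 1`; the central position and the symmetric row `0` join the symmetric factor. -/
theorem two_det_bordered_even_pos {R : Type*} [CommRing R] (x : ℕ → R) (k : ℕ) :
    2 * (Matrix.of fun i j : Fin (2 * k + 1 + 1) => borderedEntry x (2 * k + 1 + 1) 1 i j).det =
      (matC x k).det * (matD x (k + 2)).det := by
  have := det_fold (m := 2 * k + 1 + 1) (k := k) (l := k + 2) (by omega)
    (borderedEntry x (2 * k + 1 + 1) 1) (fun a => k + 2 + a) (fun b => k + 1 - b)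
    (by intros; omega) (by intros; omega) (by intros; omega) (by intros; omega)
    (by intros; omega) 1 0 1 (fun i j => x ((i : ℤ) - (j : ℤ)).natAbs - x (i + j + 2))
    (fun i j => x ((i : ℤ) - (j : ℤ)).natAbs + if i = 0 then 0 else x (i + j)) ?_ ?_ ?_
  · rw [det_eq_two_mul_row _ (matD x (k + 2)) _ _]
    · rw [this]
      exact mul_left_comm _ _ _
    · intro j; simp [matD, two_mul]
    · intro i j hi
      simp [matD, hi]
  all_goals unfold borderedEntry; intro a ha b hb
  · grind
  · grind
  · grind

/-- With `n = k + 1`: reflection in position `n` when row `0` is antisymmetric, so that it joins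
the antisymmetric factor, and the central position the symmetric one. -/
theorem two_det_bordered_even_neg {R : Type*} [CommRing R] (x : ℕ → R) (k : ℕ) :
    2 * (Matrix.of fun i j : Fin (2 * k + 1 + 1) => borderedEntry x (2 * k + 1 + 1) (-1) i j).det =
      (matC x (k + 1)).det * (matD x (k + 1)).det := by
  have := det_fold (m := 2 * k + 1 + 1) (k := k + 1) (l := k + 1) (by omega)
    (borderedEntry x (2 * k + 1 + 1) (-1)) (fun a => k + 1 + a) (fun b => k - b)
    (by intros; omega) (by intros; omega) (by intros; omega) (by intros; omega)
    (by intros; omega) 0 1 (-1)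
    (fun i j => x ((i : ℤ) - (j : ℤ)).natAbs + if j = 0 then 0 else x (i + j))
    (fun i j => x ((i : ℤ) - (j : ℤ)).natAbs - x (i + j + 2)) ?_ ?_ ?_
  · have hD : (matD x (k + 1)).det = 2 * (Matrix.of fun i j : Fin (k + 1) =>
        x ((i : ℤ) - (j : ℤ)).natAbs + if (j : ℕ) = 0 then 0 else x (i + j)).det := by
      rw [← Matrix.det_transpose, ← Matrix.det_transpose (Matrix.of _)]
      refine det_eq_two_mul_row _ _ ?_ ?_
      · intro j; simp [matD, two_mul]
      · intro i j hi
        simp [matD, hi]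
    rw [this, hD, mul_left_comm (matC x (k + 1)).det, mul_comm (matC x (k + 1)).det]
    rfl
  all_goals unfold borderedEntry; intro a ha b hb
  · grind
  · grind
  · grind

/-- Equation (8) of Section 9 of the paper (with `d_k = (1/2)·det D_k` cleared of
denominators): `b_{n+1}²(c_n d_n + c_{n-1} d_{n+1}) + b_n²(c_{n+1} d_{n+1} + c_n d_{n+2})
= 4 b_{n+1} b_n c_n d_{n+1}`. -/
theorem BC_relation {R : Type*} [CommRing R] (x : ℕ → R) (n : ℕ) (hn : 1 ≤ n) :
    (matB x (n + 1)).det ^ 2 *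
        ((matC x n).det * (matD x n).det + (matC x (n - 1)).det * (matD x (n + 1)).det) +
      (matB x n).det ^ 2 *
        ((matC x (n + 1)).det * (matD x (n + 1)).det + (matC x n).det * (matD x (n + 2)).det) =
      4 * (matB x (n + 1)).det * (matB x n).det * (matC x n).det * (matD x (n + 1)).det := by
  have even : ∀ k : ℕ, (matC x (k + 1)).det * (matD x (k + 1)).det +
      (matC x k).det * (matD x (k + 2)).det = 4 * ((matB x (k + 1)).det * (matB' x (k + 1)).det) := by
    intro k
    rw [← detA_even, ← two_det_bordered_even_pos, ← two_det_bordered_even_neg]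
    linear_combination 2 * bordered_add x (2 * k + 1)
  have odd : (matB x n).det * (matB' x (n + 1)).det + (matB x (n + 1)).det * (matB' x n).det =
      (matC x n).det * (matD x (n + 1)).det := by
    have hpos := det_bordered_odd x n 1 (by ring)
    have hneg := det_bordered_odd x n (-1) (by ring)
    simp only [one_mul, neg_mul, sub_neg_eq_add, ← sub_eq_add_neg] at hpos hneg
    rw [← two_detA_odd, ← bordered_add x (2 * n), hpos, hneg]
    simp only [matB, matB']
    ring
  obtain ⟨k, rfl⟩ : ∃ k, n = k + 1 := ⟨n - 1, by omega⟩
  rw [Nat.add_sub_cancel, even k, even (k + 1)]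
  linear_combination 4 * (matB x (k + 1 + 1)).det * (matB x (k + 1)).det * odd
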